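/- Let 𝔪, a, r, θ be arbitrary real numbers and set Δ := r² − 2𝔪r + a², ϱ² := r² + a²cos²θ. Let B be the 4×4 real symmetric matrix B = (Δ/ϱ²)·u uᵀ − u e₁ᵀ − e₁ uᵀ − ϱ²·e₂ e₂ᵀ − (sin²θ/ϱ²)·w wᵀ, where u = (1, 0, 0, −a sin²θ)ᵀ, w = (a, 0, 0, −(r²+a²))ᵀ, e₁ = (0,1,0,0)ᵀ, e₂ = (0,0,1,0)ᵀ (for ϱ² = 0 define the entries by the same rational expressions; all entries of B are in fact polynomial in r and smooth in θ away from ϱ² = 0). Then det B = −ϱ⁴ sin²θ = −(r² + a²cos²θ)² sin²θ. In particular, B is invertible whenever ϱ² ≠ 0 and sin θ ≠ 0, regardless of the sign or vanishing of Δ. -/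

import Mathlib

open Matrix Real

/-- The coordinate matrix of the Kerr metric in the regular coordinates
`(t_*, r, θ, φ_*)`, smooth across the event horizon. -/
noncomputable def kerrStar (𝔪 a r θ : ℝ) : Matrix (Fin 4) (Fin 4) ℝ :=
  let Δ : ℝ := r ^ 2 - 2 * 𝔪 * r + a ^ 2
  let ϱ2 : ℝ := r ^ 2 + a ^ 2 * Real.cos θ ^ 2
  let u : Fin 4 → ℝ := ![1, 0, 0, -(a * Real.sin θ ^ 2)]
  let w : Fin 4 → ℝ := ![a, 0, 0, -(r ^ 2 + a ^ 2)]
  let e1 : Fin 4 → ℝ := ![0, 1, 0, 0]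
  let e2 : Fin 4 → ℝ := ![0, 0, 1, 0]
  (Δ / ϱ2) • vecMulVec u u - vecMulVec u e1 - vecMulVec e1 u
    - ϱ2 • vecMulVec e2 e2 - (Real.sin θ ^ 2 / ϱ2) • vecMulVec w w

/-!
In the frame dual to `u = dt_* - a sin²θ dφ_*`, `dr`, `dθ`, `w = a dt_* - (r² + a²) dφ_*`, the
vector dual to `dr` is null and pairs only with the one dual to `u`, so the coefficient `Δ / ϱ²` of
`u²` does not enter the Gram determinant, which is `-ϱ² · (sin²θ / ϱ²)`. Passing to coordinates
multiplies it by the square of the coframe determinant, which is `-ϱ²` because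
`r² + a² - a² sin²θ = ϱ²`.
-/

-- Valid also at `s = 0`, where `t / s = 0`: this covers the degenerate locus `ϱ² = 0`.
theorem div_mul_sq_self {K : Type*} [GroupWithZero K] (t s : K) : t / s * s ^ 2 = t * s := by
  rw [div_eq_mul_inv, sq, mul_assoc, ← mul_assoc s⁻¹, inv_mul_mul_self]

theorem transpose_mul_mul_eq_sum_smul_vecMulVec {k l m n R : Type*} [Fintype k] [Fintype l]
    [NonUnitalCommSemiring R] (E : Matrix k m R) (G : Matrix k l R) (F : Matrix l n R) :
    Eᵀ * G * F = ∑ i, ∑ j, G i j • vecMulVec (E i) (F j) := by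
  ext x y
  simp only [mul_apply, transpose_apply, Finset.sum_mul, Matrix.sum_apply, Matrix.smul_apply,
    vecMulVec_apply, smul_eq_mul]
  rw [Finset.sum_comm]
  refine Finset.sum_congr rfl fun i _ => Finset.sum_congr rfl fun j _ => ?_
  rw [mul_comm (E i x), mul_assoc]

theorem det_transpose_mul_mul {n R : Type*} [Fintype n] [DecidableEq n] [CommRing R]
    (G F : Matrix n n R) : (Fᵀ * G * F).det = G.det * F.det ^ 2 := by
  rw [det_mul, det_mul, det_transpose]
  ring

section NullPair

variable {R : Type*} [CommRing R]

/-- The Gram matrix of the quadratic form `p u² - 2 u ℓ - s m² - q w²` in the frame dual to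
`(u, ℓ, m, w)`. The vector dual to `ℓ` is null and pairs only with the one dual to `u`. -/
def nullPairGram (p s q : R) : Matrix (Fin 4) (Fin 4) R :=
  !![p, -1, 0, 0; -1, 0, 0, 0; 0, 0, -s, 0; 0, 0, 0, -q]

theorem det_nullPairGram (p s q : R) : (nullPairGram p s q).det = -(s * q) := by
  simp [nullPairGram, det_succ_row_zero, Fin.sum_univ_succ, Fin.succAbove]

theorem transpose_mul_nullPairGram_mul (p s q : R) (u ℓ m w : Fin 4 → R) :
    (of ![u, ℓ, m, w])ᵀ * nullPairGram p s q * of ![u, ℓ, m, w] =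
      p • vecMulVec u u - vecMulVec u ℓ - vecMulVec ℓ u - s • vecMulVec m m
        - q • vecMulVec w w := by
  rw [transpose_mul_mul_eq_sum_smul_vecMulVec]
  simp only [nullPairGram, Fin.sum_univ_four, of_apply, cons_val', cons_val_fin_one, cons_val_zero,
    cons_val_one, cons_val, neg_smul, one_smul, zero_smul, add_zero, zero_add]
  abel

end NullPair

/-- The coframe `u = dt_* - a sin²θ dφ_*`, `dr`, `dθ`, `w = a dt_* - (r² + a²) dφ_*` of the Kerr
metric; each row lists the components of one covector in the coordinates `(t_*, r, θ, φ_*)`. -/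
noncomputable def kerrCoframe (a r θ : ℝ) : Matrix (Fin 4) (Fin 4) ℝ :=
  of ![![1, 0, 0, -(a * sin θ ^ 2)], ![0, 1, 0, 0], ![0, 0, 1, 0], ![a, 0, 0, -(r ^ 2 + a ^ 2)]]

theorem det_kerrCoframe (a r θ : ℝ) :
    (kerrCoframe a r θ).det = -(r ^ 2 + a ^ 2 * cos θ ^ 2) := by
  have hminor : (kerrCoframe a r θ).det = -(r ^ 2 + a ^ 2) + a * sin θ ^ 2 * a := by
    simp [kerrCoframe, det_succ_row_zero, Fin.sum_univ_succ, Fin.succAbove, pow_succ]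
  rw [hminor, sin_sq]
  ring

theorem kerrStar_eq_transpose_mul_nullPairGram_mul (𝔪 a r θ : ℝ) :
    kerrStar 𝔪 a r θ = (kerrCoframe a r θ)ᵀ *
      nullPairGram ((r ^ 2 - 2 * 𝔪 * r + a ^ 2) / (r ^ 2 + a ^ 2 * cos θ ^ 2))
        (r ^ 2 + a ^ 2 * cos θ ^ 2) (sin θ ^ 2 / (r ^ 2 + a ^ 2 * cos θ ^ 2)) *
      kerrCoframe a r θ :=
  (transpose_mul_nullPairGram_mul ..).symm

/-- The determinant of the Kerr metric in the regular coordinates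
`(t_*, r, θ, φ_*)` is `−ϱ⁴ sin²θ`; in particular the metric is nondegenerate
wherever `ϱ² ≠ 0` and `sin θ ≠ 0`, regardless of the sign or vanishing of `Δ`. -/
theorem kerrStar_det (𝔪 a r θ : ℝ) :
    (kerrStar 𝔪 a r θ).det
        = -((r ^ 2 + a ^ 2 * Real.cos θ ^ 2) ^ 2 * Real.sin θ ^ 2) ∧
      (r ^ 2 + a ^ 2 * Real.cos θ ^ 2 ≠ 0 → Real.sin θ ≠ 0 →
        IsUnit (kerrStar 𝔪 a r θ)) := by
  set ρ2 := r ^ 2 + a ^ 2 * cos θ ^ 2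
  have hdet : (kerrStar 𝔪 a r θ).det = -(ρ2 ^ 2 * sin θ ^ 2) := by
    rw [kerrStar_eq_transpose_mul_nullPairGram_mul, det_transpose_mul_mul, det_nullPairGram,
      det_kerrCoframe, neg_sq, neg_mul, mul_assoc, div_mul_sq_self]
    ring
  refine ⟨hdet, fun hρ hsin => ?_⟩
  rw [isUnit_iff_isUnit_det, hdet, isUnit_iff_ne_zero]
  exact neg_ne_zero.mpr (mul_ne_zero (pow_ne_zero 2 hρ) (pow_ne_zero 2 hsin))
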